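/- Let W be the group of ℤ-linear automorphisms g of V = (Fin 7 → ℤ) satisfying ⟨g x, g y⟩ = ⟨x, y⟩ for all x, y ∈ V and g K = K, acting on the ℚ-vector space 𝒱 of functions from the set of lines to ℚ by (g ⬝ v)(L) = v(g⁻¹ L). Let T ⊆ 𝒱 be the ℚ-span of the indicator functions of the 45 triangles. Then T is W-invariant, and the quotient representation 𝒱/T is 6-dimensional and irreducible, i.e. the only W-invariant subspaces of 𝒱/T are 0 and 𝒱/T itself. -/

import Mathlib

/-- The symmetric bilinear form of signature (1,6) on the lattice `Fin 7 → ℤ`,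
modelling the Picard lattice of a smooth cubic surface. -/
def B (x y : Fin 7 → ℤ) : ℤ :=
  x 0 * y 0 - x 1 * y 1 - x 2 * y 2 - x 3 * y 3 - x 4 * y 4 - x 5 * y 5 - x 6 * y 6

/-- The canonical class `K = (-3,1,1,1,1,1,1)`. -/
def K : Fin 7 → ℤ := ![-3, 1, 1, 1, 1, 1, 1]

/-- A line is a vector `L` with `⟨L,L⟩ = -1` and `⟨L,K⟩ = -1`. -/
def IsLine (L : Fin 7 → ℤ) : Prop := B L L = -1 ∧ B L K = -1

/-- A triangle is a 3-element set of (pairwise distinct) lines summing to `-K`. -/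
def IsTriangle (T : Finset (Fin 7 → ℤ)) : Prop :=
  T.card = 3 ∧ (∀ L ∈ T, IsLine L) ∧ ∑ L ∈ T, L = -K

/-- The set of ℤ-linear automorphisms of the lattice preserving the form and fixing `K`:
the Weyl group of `E₆`. -/
def Wset : Set ((Fin 7 → ℤ) ≃ₗ[ℤ] (Fin 7 → ℤ)) :=
  {g | (∀ x y, B (g x) (g y) = B x y) ∧ g K = K}

/-- The ℚ-vector space of functions from the set of lines to ℚ. -/
abbrev Vq : Type := {L : Fin 7 → ℤ // IsLine L} → ℚ

/-- The indicator function of a triangle: value 1 at each of its lines, 0 elsewhere. -/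
def chi (T : Finset (Fin 7 → ℤ)) : Vq :=
  fun L => if (L : Fin 7 → ℤ) ∈ T then 1 else 0

/-- The span of the 45 indicator vectors of triangles. -/
def Vtet : Submodule ℚ Vq := Submodule.span ℚ (chi '' {T | IsTriangle T})

/-- A subspace `U` of the space of ℚ-valued functions on the 27 lines is `W`-invariant if
for every `g ∈ W` and every `v ∈ U`, the function `g ⬝ v : L ↦ v (g⁻¹ L)` (characterized by
`(g ⬝ v) (g L) = v L`) again belongs to `U`. -/
def IsWInvariant (U : Submodule ℚ Vq) : Prop :=
  ∀ g ∈ Wset, ∀ v ∈ U, ∀ w : Vq,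
    (∀ L M : {L : Fin 7 → ℤ // IsLine L},
      g (L : Fin 7 → ℤ) = (M : Fin 7 → ℤ) → w M = v L) → w ∈ U

/-- the exceptional line `E_i` -/
def lE (i : Fin 6) : Fin 7 → ℤ := fun k => if k = i.succ then 1 else 0

/-- the line `H - E_i - E_j` -/
def lF (i j : Fin 6) : Fin 7 → ℤ :=
  fun k => if k = 0 then 1 else if k = i.succ ∨ k = j.succ then -1 else 0

/-- the line `2H - ∑_{i ≠ j} E_i` -/
def lG (j : Fin 6) : Fin 7 → ℤ :=
  fun k => if k = 0 then 2 else if k = j.succ then 0 else -1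

instance decLine (L : Fin 7 → ℤ) : Decidable (IsLine L) := by
  unfold IsLine; infer_instance

lemma lE_line (i : Fin 6) : IsLine (lE i) := by revert i; decide

lemma lF_line (i j : Fin 6) (h : i ≠ j) : IsLine (lF i j) := by revert i j; decide

lemma lG_line (i : Fin 6) : IsLine (lG i) := by revert i; decide

lemma two_vals (x a : ℤ) (h : x * x - a * x ≤ 0) (ha : a = 1 ∨ a = -1) : x = 0 ∨ x = a := by
  rcases ha with rfl | rfl
  · have h1 : 0 ≤ x := by nlinarith
    have h2 : x ≤ 1 := by nlinarith
    omega
  · have h1 : x ≤ 0 := by nlinarith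
    have h2 : -1 ≤ x := by nlinarith
    omega

lemma nn_vals (x a : ℤ) (ha : a = 1 ∨ a = -1) : 0 ≤ x * x - a * x := by
  rcases ha with rfl | rfl
  · rcases le_or_gt x 0 with h | h <;> nlinarith
  · rcases le_or_gt 0 x with h | h
    · nlinarith
    · nlinarith

lemma line_cases (L : Fin 7 → ℤ) (h : IsLine L) :
    (∃ i, L = lE i) ∨ (∃ i j, i ≠ j ∧ L = lF i j) ∨ (∃ j, L = lG j) := by
  obtain ⟨d, x, rfl⟩ : ∃ d x, L = Fin.cons d x := ⟨L 0, Fin.tail L, (Fin.cons_self_tail L).symm⟩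
  obtain ⟨a, b, c, e, f, g, rfl⟩ : ∃ a b c e f g : ℤ, x = ![a, b, c, e, f, g] :=
    ⟨x 0, x 1, x 2, x 3, x 4, x 5, by ext i; fin_cases i <;> rfl⟩
  obtain ⟨h1, h2⟩ := h
  change d * d - a * a - b * b - c * c - e * e - f * f - g * g = -1 at h1
  change d * (-3) - a * 1 - b * 1 - c * 1 - e * 1 - f * 1 - g * 1 = -1 at h2
  have hd : d = 0 ∨ d = 1 ∨ d = 2 := by
    have hc : (a + b + c + e + f + g) ^ 2 ≤ 6 * (a * a + b * b + c * c + e * e + f * f + g * g) := by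
      nlinarith [sq_nonneg (a - b), sq_nonneg (a - c), sq_nonneg (a - e), sq_nonneg (a - f),
        sq_nonneg (a - g), sq_nonneg (b - c), sq_nonneg (b - e), sq_nonneg (b - f),
        sq_nonneg (b - g), sq_nonneg (c - e), sq_nonneg (c - f), sq_nonneg (c - g),
        sq_nonneg (e - f), sq_nonneg (e - g), sq_nonneg (f - g)]
    have hs : a + b + c + e + f + g = 1 - 3 * d := by linarith
    have hq : a * a + b * b + c * c + e * e + f * f + g * g = d * d + 1 := by linarith
    rw [hs, hq] at hc
    have h3 : 0 ≤ d := by nlinarith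
    have h4 : d ≤ 2 := by nlinarith
    omega
  obtain ⟨s, hs, hsum⟩ : ∃ s : ℤ, (s = 1 ∨ s = -1) ∧
      (a * a - s * a) + (b * b - s * b) + (c * c - s * c) + (e * e - s * e) + (f * f - s * f)
       + (g * g - s * g) = 0 ∧ (d = 0 → s = 1) ∧ (d ≠ 0 → s = -1) := by
    rcases hd with rfl | rfl | rfl
    · exact ⟨1, Or.inl rfl, by linarith, by simp, by simp⟩
    · exact ⟨-1, Or.inr rfl, by linarith, by simp, by simp⟩
    · exact ⟨-1, Or.inr rfl, by linarith, by simp, by simp⟩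
  obtain ⟨hsum, hs0, hs1⟩ := hsum
  have na := nn_vals a s hs
  have nb := nn_vals b s hs
  have nc := nn_vals c s hs
  have ne := nn_vals e s hs
  have nf := nn_vals f s hs
  have ng := nn_vals g s hs
  have va := two_vals a s (by linarith) hs
  have vb := two_vals b s (by linarith) hs
  have vc := two_vals c s (by linarith) hs
  have ve := two_vals e s (by linarith) hs
  have vf := two_vals f s (by linarith) hs
  have vg := two_vals g s (by linarith) hs
  clear na nb nc ne nf ng hsum h1
  rcases hd with rfl | rfl | rfl
  · obtain rfl := hs0 rfl
    left
    clear hs hs0 hs1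
    rcases va with rfl | rfl <;> rcases vb with rfl | rfl <;> rcases vc with rfl | rfl <;>
    rcases ve with rfl | rfl <;> rcases vf with rfl | rfl <;> rcases vg with rfl | rfl <;>
    first
    | (exfalso; revert h2; decide)
    | decide
  · obtain rfl := hs1 (by simp)
    right; left
    clear hs hs0 hs1
    rcases va with rfl | rfl <;> rcases vb with rfl | rfl <;> rcases vc with rfl | rfl <;>
    rcases ve with rfl | rfl <;> rcases vf with rfl | rfl <;> rcases vg with rfl | rfl <;>
    first
    | (exfalso; revert h2; decide)
    | decide
  · obtain rfl := hs1 (by simp)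
    right; right
    clear hs hs0 hs1
    rcases va with rfl | rfl <;> rcases vb with rfl | rfl <;> rcases vc with rfl | rfl <;>
    rcases ve with rfl | rfl <;> rcases vf with rfl | rfl <;> rcases vg with rfl | rfl <;>
    first
    | (exfalso; revert h2; decide)
    | decide

/-- the type of lines -/
abbrev Ln : Type := {L : Fin 7 → ℤ // IsLine L}

instance finLn : Finite Ln := by
  have : Set.Finite {L : Fin 7 → ℤ | IsLine L} := by
    refine Set.Finite.subset ((Set.finite_range lE).union ((Set.finite_range
      (fun p : Fin 6 × Fin 6 => lF p.1 p.2)).union (Set.finite_range lG))) ?_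
    intro L hL
    rcases line_cases L hL with ⟨i, rfl⟩ | ⟨i, j, -, rfl⟩ | ⟨i, rfl⟩
    · exact Or.inl ⟨i, rfl⟩
    · exact Or.inr (Or.inl ⟨(i, j), rfl⟩)
    · exact Or.inr (Or.inr ⟨i, rfl⟩)
  exact this

noncomputable instance fintypeLn : Fintype Ln := Fintype.ofFinite _

/-- projection of the lattice along `K`, in the basis `E_i` -/
def pr (L : Fin 7 → ℤ) (i : Fin 6) : ℚ := (L i.succ : ℚ) + (L 0 : ℚ) / 3

/-- the quotient map to `ℚ^6` -/
noncomputable def psi : Vq →ₗ[ℚ] (Fin 6 → ℚ) where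
  toFun v := fun i => ∑ L : Ln, v L * pr L.1 i
  map_add' v w := by
    ext i; simp [add_mul, Finset.sum_add_distrib]
  map_smul' c v := by
    ext i; simp [Finset.mul_sum, mul_assoc]

lemma psi_apply (v : Vq) (i : Fin 6) : psi v i = ∑ L : Ln, v L * pr L.1 i := rfl

lemma pr_sum (T : Finset (Fin 7 → ℤ)) (i : Fin 6) : ∑ L ∈ T, pr L i = pr (∑ L ∈ T, L) i := by
  simp [pr, Finset.sum_add_distrib, Finset.sum_apply, Finset.sum_div]

lemma psi_chi (T : Finset (Fin 7 → ℤ)) (hT : ∀ L ∈ T, IsLine L) (i : Fin 6) :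
    psi (chi T) i = pr (∑ L ∈ T, L) i := by
  classical
  rw [← pr_sum, psi_apply]
  simp only [chi, ite_mul, one_mul, zero_mul]
  rw [← Finset.sum_filter]
  refine Finset.sum_bij (fun L _ => L.1) ?_ ?_ ?_ ?_
  · intro a ha; simpa using ha
  · intro a _ b _ h; exact Subtype.ext h
  · intro b hb; exact ⟨⟨b, hT b hb⟩, by simpa using hb, rfl⟩
  · intro a _; rfl

lemma pr_negK (i : Fin 6) : pr (-K) i = 0 := by
  fin_cases i <;> norm_num [pr, K, Fin.succ]

lemma tet_le : Vtet ≤ LinearMap.ker psi := by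
  refine Submodule.span_le.2 ?_
  rintro _ ⟨T, hT, rfl⟩
  change psi (chi T) = 0
  ext i
  rw [psi_chi T hT.2.1, hT.2.2, pr_negK]; rfl

/-- class of a line in the quotient -/
def cl (L : Fin 7 → ℤ) : Vq ⧸ Vtet := Vtet.mkQ (chi {L})

lemma cl_tri (a b c : Fin 7 → ℤ) (hab : a ≠ b) (hac : a ≠ c) (hbc : b ≠ c)
    (ha : IsLine a) (hb : IsLine b) (hc : IsLine c) (h : a + b + c = -K) :
    cl a + cl b + cl c = 0 := by
  have h1 : chi {a} + chi {b} + chi {c} = chi {a, b, c} := by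
    ext L
    simp only [chi, Pi.add_apply, Finset.mem_singleton, Finset.mem_insert]
    by_cases h1 : L.1 = a
    · simp [h1, hab, hac]
    · by_cases h2 : L.1 = b
      · simp [h2, hab.symm, hbc]
      · simp [h1, h2]
  unfold cl
  rw [← map_add, ← map_add, h1]
  refine (Submodule.Quotient.mk_eq_zero _).2 (Submodule.subset_span ⟨_, ⟨?_, ?_, ?_⟩, rfl⟩)
  · exact Finset.card_eq_three.2 ⟨a, b, c, hab, hac, hbc, rfl⟩
  · intro L hL
    simp only [Finset.mem_insert, Finset.mem_singleton] at hL
    rcases hL with rfl | rfl | rfl <;> assumption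
  · rw [Finset.sum_insert (by simp [hab, hac]), Finset.sum_insert (by simp [hbc]),
      Finset.sum_singleton, ← h, add_assoc]

lemma rel1 (i j : Fin 6) (h : i ≠ j) : cl (lE i) + cl (lG j) + cl (lF i j) = 0 := by
  apply cl_tri _ _ _ _ _ _ (lE_line i) (lG_line j) (lF_line i j h)
  all_goals (revert i j; decide)

lemma rel2 : cl (lF 0 1) + cl (lF 2 3) + cl (lF 4 5) = 0 := by
  apply cl_tri <;> decide

lemma lF_symm (i j : Fin 6) : lF i j = lF j i := by
  ext k; simp [lF, or_comm]

/-- the image of the hyperplane class -/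
def cc : Vq ⧸ Vtet := cl (lE 0) - cl (lG 0)

lemma clG (j : Fin 6) : cl (lG j) = cl (lE j) - cc := by
  unfold cc
  by_cases h : j = 0
  · subst h; abel
  · have h1 := rel1 0 j (Ne.symm h)
    have h2 := rel1 j 0 h
    rw [lF_symm] at h2
    rw [← sub_eq_zero] 
    have : cl (lG j) - (cl (lE j) - (cl (lE 0) - cl (lG 0))) =
      (cl (lE 0) + cl (lG j) + cl (lF 0 j)) - (cl (lE j) + cl (lG 0) + cl (lF 0 j)) := by abel
    rw [this, h1, h2, sub_zero]

lemma clF (i j : Fin 6) (h : i ≠ j) : cl (lF i j) = cc - cl (lE i) - cl (lE j) := by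
  have h1 := rel1 i j h
  rw [clG] at h1
  rw [← sub_eq_zero, ← h1]; abel

lemma cc_eq : ∑ i, cl (lE i) = (3 : ℚ) • cc := by
  have h := rel2
  rw [clF _ _ (by decide), clF _ _ (by decide), clF _ _ (by decide)] at h
  rw [Fin.sum_univ_six, ← sub_eq_zero, ← neg_eq_zero, ← h]
  module

lemma sum_ite_E (x : Fin 6 → ℤ) (d : ℤ) :
    ∑ i, ((x i : ℚ) + (d : ℚ) / 3) • cl (lE i) = ∑ i, (x i : ℚ) • cl (lE i) + (d : ℚ) • cc := by
  simp only [add_smul, Finset.sum_add_distrib]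
  rw [← Finset.smul_sum, cc_eq, smul_smul]
  congr 2; ring

lemma cl_line (L : Fin 7 → ℤ) (h : IsLine L) : cl L = ∑ i, pr L i • cl (lE i) := by
  have := sum_ite_E (fun i => L i.succ) (L 0)
  unfold pr
  rw [this]; clear this
  rcases line_cases L h with ⟨i, rfl⟩ | ⟨i, j, hij, rfl⟩ | ⟨j, rfl⟩
  · simp [lE, (Fin.succ_ne_zero _).symm]
  · rw [clF i j hij]
    have : ∀ k : Fin 6, (((lF i j k.succ : ℤ) : ℚ)) • cl (lE k) =
        -((if k = i then cl (lE k) else 0) + (if k = j then cl (lE k) else 0)) := by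
      intro k
      by_cases h1 : k = i
      · subst h1; simp [lF, hij]
      · by_cases h2 : k = j
        · subst h2; simp [lF, h1]
        · simp [lF, h1, h2]
    rw [Finset.sum_congr rfl (fun k _ => this k)]
    simp only [Finset.sum_neg_distrib, Finset.sum_add_distrib]
    simp [lF]
    abel
  · rw [clG]
    have : ∀ k : Fin 6, (((lG j k.succ : ℤ) : ℚ)) • cl (lE k) =
        (if k = j then cl (lE k) else 0) - cl (lE k) := by
      intro k
      by_cases h1 : k = j
      · subst h1; simp [lG]
      · simp [lG, h1]
    rw [Finset.sum_congr rfl (fun k _ => this k)]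
    simp only [Finset.sum_sub_distrib]
    rw [cc_eq]
    simp [lG]
    module

lemma chi_single (L : Ln) : chi {L.1} = fun M => if M = L then 1 else 0 := by
  ext M; simp [chi, Subtype.ext_iff]

lemma mk_eq (v : Vq) : Vtet.mkQ v = ∑ i, psi v i • cl (lE i) := by
  classical
  have hv : v = ∑ L : Ln, v L • chi {L.1} := by
    ext M
    simp [chi_single, Finset.sum_apply]
  conv_lhs => rw [hv]
  rw [map_sum]
  simp only [psi_apply, Finset.sum_smul]
  rw [Finset.sum_comm]
  refine Finset.sum_congr rfl fun L _ => ?_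
  rw [map_smul]
  change v L • cl L.1 = _
  rw [cl_line L.1 L.2, Finset.smul_sum]
  simp only [smul_smul]

lemma ker_eq : LinearMap.ker psi = Vtet := by
  refine le_antisymm ?_ tet_le
  intro v hv
  have hv : psi v = 0 := hv
  have := mk_eq v
  rw [hv] at this
  exact (Submodule.Quotient.mk_eq_zero _).1 (by simpa using this)

lemma psi_E (j : Fin 6) : psi (chi {lE j}) = Pi.single j 1 := by
  ext i
  rw [psi_chi _ (by simpa using lE_line j)]
  simp [pr, lE, Pi.single_apply, (Fin.succ_ne_zero _).symm]

lemma psi_surj : Function.Surjective psi := by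
  intro q
  refine ⟨∑ i, q i • chi {lE i}, ?_⟩
  rw [map_sum]
  simp only [map_smul, psi_E]
  ext k
  simp [Finset.sum_apply, Pi.single_apply]

lemma finrank_quot : Module.finrank ℚ (Vq ⧸ Vtet) = 6 := by
  rw [← ker_eq, (psi.quotKerEquivOfSurjective psi_surj).finrank_eq]
  simp

lemma g_line (g : (Fin 7 → ℤ) ≃ₗ[ℤ] (Fin 7 → ℤ)) (hg : g ∈ Wset) (L : Fin 7 → ℤ) :
    IsLine (g L) ↔ IsLine L := by
  obtain ⟨h1, h2⟩ := hg
  unfold IsLine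
  have : B (g L) K = B L K := by
    conv_lhs => rw [← h2]
    exact h1 _ _
  rw [h1, this]

lemma tet_inv : IsWInvariant Vtet := by
  classical
  intro g hg v hv w hw
  let s : Ln → Ln := fun M => ⟨g.symm M.1, by
    rw [← g_line g hg]; simpa using M.2⟩
  have hws : w = LinearMap.funLeft ℚ ℚ s v := by
    ext M
    exact hw (s M) M (by simp [s])
  rw [hws]
  suffices h : Vtet ≤ Vtet.comap (LinearMap.funLeft ℚ ℚ s) from h hv
  refine Submodule.span_le.2 ?_
  rintro _ ⟨T, ⟨h1, h2, h3⟩, rfl⟩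
  refine Submodule.subset_span ⟨T.map g.toEquiv.toEmbedding, ⟨?_, ?_, ?_⟩, ?_⟩
  · simpa using h1
  · intro L hL
    obtain ⟨M, hM, rfl⟩ := Finset.mem_map.1 hL
    exact (g_line g hg M).2 (h2 M hM)
  · rw [Finset.sum_map]
    change ∑ x ∈ T, g x = _
    rw [← map_sum, h3, map_neg, hg.2]
  · ext M
    have : M.1 ∈ T.map g.toEquiv.toEmbedding ↔ (s M).1 ∈ T := Finset.mem_map_equiv
    simp only [chi, LinearMap.funLeft_apply, this]

/-- the form is linear -/
lemma B_add_smul (x a : Fin 7 → ℤ) (n : ℤ) (y : Fin 7 → ℤ) :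
    B (x + n • a) y = B x y + n * B a y := by
  simp [B]; ring

lemma B_comm (x y : Fin 7 → ℤ) : B x y = B y x := by
  simp [B]; ring

/-- the reflection in a root -/
def rootRefl (a : Fin 7 → ℤ) (ha : B a a = -2) : (Fin 7 → ℤ) ≃ₗ[ℤ] (Fin 7 → ℤ) :=
  LinearEquiv.ofInvolutive
    { toFun := fun x => x + B x a • a
      map_add' := by
        intro x y
        have : B (x + y) a = B x a + B y a := by simp [B]; ring
        rw [this]; module
      map_smul' := by
        intro c x
        have : B (c • x) a = c * B x a := by simp [B]; ring
        rw [this]; simp only [RingHom.id_apply]; module }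
    (by
      intro x
      change (x + B x a • a) + B (x + B x a • a) a • a = x
      rw [B_add_smul, ha]; module)

lemma rootRefl_apply (a : Fin 7 → ℤ) (ha : B a a = -2) (x : Fin 7 → ℤ) :
    rootRefl a ha x = x + B x a • a := rfl

lemma rootRefl_mem (a : Fin 7 → ℤ) (ha : B a a = -2) (hK : B K a = 0) : rootRefl a ha ∈ Wset := by
  constructor
  · intro x y
    rw [rootRefl_apply, rootRefl_apply, B_add_smul, B_comm x, B_comm a, B_add_smul, B_add_smul, ha,
      B_comm a x, B_comm y x]
    ring
  · rw [rootRefl_apply, hK]; simp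

lemma B_pr (x a : Fin 7 → ℤ) (hK : B K a = 0) :
    (B x a : ℚ) = -∑ j, (a j.succ : ℚ) * pr x j := by
  have h : a 0 * (-3) - a 1 - a 2 - a 3 - a 4 - a 5 - a 6 = 0 := by
    have : B K a = -3 * a 0 - 1 * a 1 - 1 * a 2 - 1 * a 3 - 1 * a 4 - 1 * a 5 - 1 * a 6 := rfl
    linarith
  have h' : (a 0 : ℚ) * (-3) - a 1 - a 2 - a 3 - a 4 - a 5 - a 6 = 0 := by exact_mod_cast h
  rw [Fin.sum_univ_six]
  change _ = -((a 1 : ℚ) * (x 1 + x 0 / 3) + (a 2 : ℚ) * (x 2 + x 0 / 3) +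
    (a 3 : ℚ) * (x 3 + x 0 / 3) + (a 4 : ℚ) * (x 4 + x 0 / 3) +
    (a 5 : ℚ) * (x 5 + x 0 / 3) + (a 6 : ℚ) * (x 6 + x 0 / 3))
  unfold B
  push_cast
  linear_combination (-(x 0 : ℚ) / 3) * h'

lemma key (U : Submodule ℚ Vq) (hU : IsWInvariant U) (a : Fin 7 → ℤ) (ha : B a a = -2)
    (hK : B K a = 0) (p : Fin 6 → ℚ) (hp : p ∈ U.map psi)
    (hne : ∑ j, (a j.succ : ℚ) * p j ≠ 0) : pr a ∈ U.map psi := by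
  obtain ⟨v, hv, rfl⟩ := hp
  have hg := rootRefl_mem a ha hK
  have hinv : ∀ x, rootRefl a ha (rootRefl a ha x) = x := by
    intro x; rw [rootRefl_apply, rootRefl_apply, B_add_smul, ha]; module
  let s : Ln → Ln := fun M => ⟨rootRefl a ha M.1, (g_line _ hg _).2 M.2⟩
  have hs : Function.Involutive s := fun M => Subtype.ext (hinv M.1)
  have hw : (fun M => v (s M)) ∈ U := by
    refine hU _ hg v hv _ ?_
    intro L M h
    have : s L = M := Subtype.ext h
    rw [← this, hs]
  have hpsi : psi (fun M => v (s M)) = psi v - (∑ j, (a j.succ : ℚ) * psi v j) • pr a := by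
    ext i
    have e1 : psi (fun M => v (s M)) i = ∑ L : Ln, v L * pr (s L).1 i := by
      rw [psi_apply, ← Equiv.sum_comp hs.toPerm]
      refine Finset.sum_congr rfl fun L _ => ?_
      change v (s (s L)) * _ = _
      rw [hs]; rfl
    have e2 : ∀ L : Ln, pr (s L).1 i = pr L.1 i + (-∑ j, (a j.succ : ℚ) * pr L.1 j) * pr a i := by
      intro L
      rw [← B_pr _ _ hK]
      change pr (L.1 + B L.1 a • a) i = _
      simp [pr]; ring
    rw [e1]
    simp only [e2, mul_add, Finset.sum_add_distrib, Pi.sub_apply, Pi.smul_apply, smul_eq_mul]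
    rw [← psi_apply, sub_eq_add_neg]
    congr 1
    simp only [psi_apply, Finset.mul_sum, Finset.sum_mul, ← Finset.sum_neg_distrib, neg_mul, mul_neg]
    rw [Finset.sum_comm]
    refine Finset.sum_congr rfl fun L _ => Finset.sum_congr rfl fun j _ => ?_
    ring
  have h1 : psi v ∈ U.map psi := Submodule.mem_map_of_mem hv
  have h2 : psi (fun M => v (s M)) ∈ U.map psi := Submodule.mem_map_of_mem hw
  have h3 := Submodule.sub_mem _ h1 h2
  rw [hpsi, sub_sub_cancel] at h3
  exact (Submodule.smul_mem_iff _ hne).1 h3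

/-- the root `E_i - E_j` -/
def rt (i j : Fin 6) : Fin 7 → ℤ := lE i - lE j

/-- the root `H - E_1 - E_2 - E_3` -/
def r0 : Fin 7 → ℤ := ![1, -1, -1, -1, 0, 0, 0]

lemma pr_rt (i j : Fin 6) : pr (rt i j) = Pi.single i 1 - Pi.single j 1 := by
  ext k
  simp [pr, rt, lE, Pi.single_apply, (Fin.succ_ne_zero _).symm]

lemma sum_rt (i j : Fin 6) (p : Fin 6 → ℚ) :
    ∑ k, (rt i j k.succ : ℚ) * p k = p i - p j := by
  simp [rt, lE, sub_mul, Finset.sum_sub_distrib]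

lemma top_of (U : Submodule ℚ Vq) (hU : IsWInvariant U) (p : Fin 6 → ℚ) (hp : p ∈ U.map psi)
    (hne : p ≠ 0) : U.map psi = ⊤ := by
  have key1 : ∀ i j, i ≠ j → ∀ p ∈ U.map psi, p i ≠ p j → pr (rt i j) ∈ U.map psi := by
    intro i j hij p hp h
    refine key U hU _ ?_ ?_ p hp ?_
    · clear h; revert i j; decide
    · clear h; revert i j; decide
    · rw [sum_rt]; exact sub_ne_zero.2 h
  have key0 : ∀ p ∈ U.map psi, p 0 + p 1 + p 2 ≠ 0 → pr r0 ∈ U.map psi := by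
    intro p hp h
    refine key U hU _ (by decide) (by decide) p hp ?_
    have : ∑ k, (r0 k.succ : ℚ) * p k = -(p 0 + p 1 + p 2) := by
      simp [Fin.sum_univ_six, r0, Fin.succ]; ring
    rw [this]; exact neg_ne_zero.2 h
  have hr0 : pr r0 = ![-2/3, -2/3, -2/3, 1/3, 1/3, 1/3] := by
    ext i; fin_cases i <;> norm_num [pr, r0, Fin.succ]
  -- some difference
  have hnc : ∃ p ∈ U.map psi, ∃ i j, p i ≠ p j := by
    by_cases hc : ∃ i j, p i ≠ p j
    · exact ⟨p, hp, hc⟩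
    · push Not at hc
      refine ⟨pr r0, key0 p hp ?_, 0, 3, ?_⟩
      · rw [hc 1 0, hc 2 0]
        intro h
        apply hne
        ext i
        rw [hc i 0]
        simp only [Pi.zero_apply]
        linarith
      · rw [hr0]; change (-2/3 : ℚ) ≠ 1/3; norm_num
  obtain ⟨p, hp, i, j, hpij⟩ := hnc
  have hsymm : ∀ i j, pr (rt i j) ∈ U.map psi → pr (rt j i) ∈ U.map psi := by
    intro i j h
    have := Submodule.neg_mem _ h
    rwa [pr_rt, neg_sub, ← pr_rt] at this
  have hij : i ≠ j := by rintro rfl; exact hpij rfl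
  have d1 : pr (rt i j) ∈ U.map psi := key1 i j hij p hp hpij
  have d2 : ∀ k, pr (rt i k) ∈ U.map psi := by
    intro k
    by_cases h1 : i = k
    · subst h1; rw [pr_rt, sub_self]; exact Submodule.zero_mem _
    · by_cases h2 : k = j
      · subst h2; exact d1
      · refine key1 i k h1 _ d1 ?_
        rw [pr_rt]
        simp [Pi.single_apply, hij, Ne.symm h1, h2]
  have d3 : ∀ k l, pr (rt k l) ∈ U.map psi := by
    intro k l
    have := Submodule.sub_mem _ (d2 l) (d2 k)
    rwa [pr_rt, pr_rt, sub_sub_sub_cancel_left, ← pr_rt] at this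
  have d4 : pr r0 ∈ U.map psi := by
    refine key0 _ (d3 2 3) ?_
    rw [pr_rt]; simp [Pi.single_apply]
  have d5 : ∀ i, (Pi.single i 1 : Fin 6 → ℚ) ∈ U.map psi := by
    intro i
    have h : (Pi.single i 1 : Fin 6 → ℚ) = -pr r0 + ∑ k, (-pr r0 k) • pr (rt i k) := by
      have hs : ∑ k, (-pr r0 k) = 1 := by
        rw [hr0, Fin.sum_univ_six]
        change -(-2/3 : ℚ) + -(-2/3) + -(-2/3) + -(1/3) + -(1/3) + -(1/3) = 1
        norm_num
      have hb : ∑ k, (-pr r0 k) • (Pi.single k 1 : Fin 6 → ℚ) = -pr r0 := by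
        ext l; simp [Finset.sum_apply, Pi.single_apply]
      simp only [pr_rt, smul_sub, Finset.sum_sub_distrib]
      rw [hb, ← Finset.sum_smul, hs]
      simp
    rw [h]
    exact Submodule.add_mem _ (Submodule.neg_mem _ d4)
      (Submodule.sum_mem _ fun k _ => Submodule.smul_mem _ _ (d3 i k))
  rw [eq_top_iff]
  intro q _
  have hq : q = ∑ k, q k • (Pi.single k 1 : Fin 6 → ℚ) := by
    ext l; simp [Finset.sum_apply, Pi.single_apply]
  rw [hq]
  exact Submodule.sum_mem _ fun k _ => Submodule.smul_mem _ _ (d5 k)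

/-- The span `T` of the 45 triangle vectors is a `W(E₆)`-invariant subspace, and the quotient
representation `𝒱/T` is 6-dimensional and irreducible: the only `W`-invariant subspaces of the
quotient (i.e. subspaces whose preimage in `𝒱` is `W`-invariant) are `0` and the whole space. -/
theorem quotient_by_triangle_span_irreducible :
    IsWInvariant Vtet ∧
    Module.finrank ℚ (Vq ⧸ Vtet) = 6 ∧
    ∀ Q : Submodule ℚ (Vq ⧸ Vtet),
      IsWInvariant (Q.comap Vtet.mkQ) → Q = ⊥ ∨ Q = ⊤ := by
  refine ⟨tet_inv, finrank_quot, ?_⟩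
  intro Q hQ
  by_cases hb : Q = ⊥
  · exact Or.inl hb
  · right
    obtain ⟨q, hq, hq0⟩ := Submodule.exists_mem_ne_zero_of_ne_bot hb
    obtain ⟨v, rfl⟩ := Vtet.mkQ_surjective q
    have hv0 : psi v ≠ 0 := by
      intro h
      apply hq0
      have : v ∈ LinearMap.ker psi := h
      rw [ker_eq] at this
      exact (Submodule.Quotient.mk_eq_zero _).2 this
    have ht := top_of _ hQ (psi v) (Submodule.mem_map_of_mem (show v ∈ Q.comap Vtet.mkQ from hq)) hv0
    rw [eq_top_iff]
    intro q' _
    obtain ⟨v', rfl⟩ := Vtet.mkQ_surjective q'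
    have : psi v' ∈ (Q.comap Vtet.mkQ).map psi := by rw [ht]; trivial
    obtain ⟨u, hu, hu'⟩ := this
    have hu : Vtet.mkQ u ∈ Q := hu
    rw [mk_eq, hu', ← mk_eq] at hu
    exact hu
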